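/- Let λ be a real number with 0 < λ ≤ 6/7. If f is a close-to-convex function on the unit disk with Taylor coefficients a_k, then |λ a_3² − a_5| ≤ 5. -/

import Mathlib

open Complex Metric

/-- The k-th Taylor coefficient of `f` at `0`: `a_k = f^{(k)}(0)/k!`. -/
noncomputable def taylorCoeff (f : ℂ → ℂ) (k : ℕ) : ℂ :=
  iteratedDeriv k f 0 / (Nat.factorial k)

/-- `g` is a (normalized) starlike function on the unit disk. -/
def IsStarlikeFn (g : ℂ → ℂ) : Prop :=
  DifferentiableOn ℂ g (ball (0 : ℂ) 1) ∧ g 0 = 0 ∧ deriv g 0 = 1 ∧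
    ∀ z ∈ ball (0 : ℂ) 1 \ {0}, 0 < (z * deriv g z / g z).re

/-- `f` is a (normalized) close-to-convex function on the unit disk. -/
def IsCloseToConvex (f : ℂ → ℂ) : Prop :=
  DifferentiableOn ℂ f (ball (0 : ℂ) 1) ∧ f 0 = 0 ∧ deriv f 0 = 1 ∧
    ∃ θ : ℝ, ∃ g : ℂ → ℂ, IsStarlikeFn g ∧
      ∀ z ∈ ball (0 : ℂ) 1 \ {0},
        0 < (Complex.exp (θ * Complex.I) * z * deriv f z / g z).re

/-!
Write `f' = p * G` with `G = g / z`. Herglotz's formula applied to `z g' / g` exhibits `log G` as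
a limit of convex combinations of `-2 log (1 - w z)`, and beta averages turn the resulting products
of powers into single kernels. So `G` lies in the closed convex hull of `1 / (1 - w z)^2`, and, with
Herglotz's formula for `p`, `f'` lies in that of `(1 - v z) / (1 - w z)^3`.

After a rotation by `η` the quantity to bound is `Re (η² a₅) - λ Re ((η a₃)²)`, at most
`Re (η² a₅) + λ Im (η a₃) ^ 2`. The latter is convex in `f'`, so only the kernels matter, and for
these `5 - Re (η² a₅) - (6 / 7) Im (η a₃) ^ 2` is a sum of nonnegative terms.
-/

open Filter Finset MeasureTheory PowerSeries ProbabilityTheory Topology ComplexConjugate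
open scoped PowerSeries.WithPiTopology

section CoefficientTopology

theorem continuous_monomial {A : Type*} [Semiring A] [TopologicalSpace A] (n : ℕ) :
    Continuous (monomial n : A →ₗ[A] A⟦X⟧) := by
  refine continuous_iff_continuousAt.2 fun a =>
    (WithPiTopology.tendsto_iff_coeff_tendsto _ _ _ _).2 fun k => ?_
  simp only [coeff_monomial]
  split_ifs
  exacts [tendsto_id, tendsto_const_nhds]

variable {A : Type*} [Ring A] [TopologicalSpace A] [Algebra ℝ A]

instance [ContinuousSMul ℝ A] : ContinuousSMul ℝ A⟦X⟧ :=
  inferInstanceAs (ContinuousSMul ℝ ((Unit →₀ ℕ) → A))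

instance [LocallyConvexSpace ℝ A] : LocallyConvexSpace ℝ A⟦X⟧ :=
  inferInstanceAs (LocallyConvexSpace ℝ ((Unit →₀ ℕ) → A))

theorem exists_forall_coeff_eq_zero_imp_apply_eq_zero (L : A⟦X⟧ →L[ℝ] ℝ) :
    ∃ N, ∀ φ, (∀ n < N, coeff n φ = 0) → L φ = 0 := by
  by_contra! h
  choose φ hφ hLφ using h
  have hlim : Tendsto (fun N => (L (φ N))⁻¹ • φ N) atTop (𝓝 0) := by
    refine (WithPiTopology.tendsto_iff_coeff_tendsto _ _ _ _).2 fun n =>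
      tendsto_const_nhds.congr' ?_
    filter_upwards [eventually_gt_atTop n] with N hN
    simp [hφ N n hN]
  have hone : Tendsto (fun _ : ℕ => (1 : ℝ)) atTop (𝓝 0) := by
    simpa [Function.comp_def, hLφ] using (L.continuous.tendsto 0).comp hlim
  exact one_ne_zero (tendsto_nhds_unique tendsto_const_nhds hone)

theorem exists_apply_eq_sum_coeff (L : A⟦X⟧ →L[ℝ] ℝ) :
    ∃ (N : ℕ) (ℓ : ℕ → A →L[ℝ] ℝ), ∀ φ, L φ = ∑ n ∈ range N, ℓ n (coeff n φ) := by
  obtain ⟨N, hN⟩ := exists_forall_coeff_eq_zero_imp_apply_eq_zero L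
  let ℓ (n : ℕ) : A →L[ℝ] ℝ :=
    L.comp ⟨(monomial n : A →ₗ[A] A⟦X⟧).restrictScalars ℝ, continuous_monomial n⟩
  refine ⟨N, ℓ, fun φ => sub_eq_zero.1 ?_⟩
  have htail : ∀ n < N, coeff n (φ - ∑ k ∈ range N, monomial k (coeff k φ)) = 0 := by
    intro n hn
    simp [coeff_monomial, hn]
  have hL := hN _ htail
  rwa [map_sub, map_sum] at hL

end CoefficientTopology

/-- Separation from a point outside `S` reduces this to the scalar case, where `L φ` is an average
of numbers bounded by `sup L(S)`. -/
theorem mem_of_coeff_eq_integral {A Ω : Type*} [NormedRing A] [NormedAlgebra ℝ A]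
    [CompleteSpace A] [MeasurableSpace Ω] {μ : Measure Ω}
    {S : Set A⟦X⟧} (hconv : Convex ℝ S) (hclosed : IsClosed S) {w : Ω → ℝ} {F : Ω → A⟦X⟧}
    {φ : A⟦X⟧} (hw : 0 ≤ᵐ[μ] w) (hw1 : ∫ ω, w ω ∂μ = 1) (hF : ∀ᵐ ω ∂μ, w ω ≠ 0 → F ω ∈ S)
    (hint : ∀ n, Integrable (fun ω => w ω • coeff n (F ω)) μ)
    (hφ : ∀ n, coeff n φ = ∫ ω, w ω • coeff n (F ω) ∂μ) : φ ∈ S := by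
  by_contra hφS
  obtain ⟨L, u, hLS, hLφ⟩ := geometric_hahn_banach_closed_point hconv hclosed hφS
  obtain ⟨N, ℓ, hℓ⟩ := exists_apply_eq_sum_coeff L
  have hLF : ∀ ω, w ω * L (F ω) = ∑ n ∈ range N, ℓ n (w ω • coeff n (F ω)) := fun ω => by
    simp only [hℓ, mul_sum, map_smul, smul_eq_mul]
  have hℓint : ∀ n ∈ range N, Integrable (fun ω => ℓ n (w ω • coeff n (F ω))) μ :=
    fun n _ => (ℓ n).integrable_comp (hint n)
  have hLφ_eq : L φ = ∫ ω, w ω * L (F ω) ∂μ := by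
    simp_rw [hLF, integral_finsetSum _ hℓint, (ℓ _).integral_comp_comm (hint _), ← hφ, ← hℓ]
  have hle : L φ ≤ u :=
    calc L φ = ∫ ω, w ω * L (F ω) ∂μ := hLφ_eq
      _ ≤ ∫ ω, w ω * u ∂μ := by
        refine integral_mono_ae ?_ ((integrable_of_integral_eq_one hw1).mul_const u) ?_
        · simpa only [hLF] using integrable_finsetSum _ hℓint
        · filter_upwards [hw, hF] with ω hω hωS
          rcases eq_or_ne (w ω) 0 with h0 | h0
          · simp [h0]
          · exact mul_le_mul_of_nonneg_left (hLS _ (hωS h0)).le hω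
      _ = u := by rw [integral_mul_const, hw1, one_mul]
  exact hLφ.not_ge hle

section BetaMoments

variable {a b : ℝ}

theorem betaPDFReal_nonneg (ha : 0 < a) (hb : 0 < b) (t : ℝ) : 0 ≤ betaPDFReal a b t := by
  by_cases ht : 0 < t ∧ t < 1
  · exact (betaPDFReal_pos ht.1 ht.2 ha hb).le
  · simp [betaPDFReal, ht]

theorem integral_betaPDFReal (ha : 0 < a) (hb : 0 < b) : ∫ t, betaPDFReal a b t = 1 := by
  rw [integral_eq_lintegral_of_nonneg_ae (ae_of_all _ (betaPDFReal_nonneg ha hb))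
    (measurable_betaPDFReal a b).aestronglyMeasurable]
  exact congrArg ENNReal.toReal (lintegral_betaPDF_eq_one ha hb)

theorem pow_mul_pow_mul_betaPDFReal (ha : 0 < a) (hb : 0 < b) (i j : ℕ) (t : ℝ) :
    t ^ i * (1 - t) ^ j * betaPDFReal a b t =
      beta (a + i) (b + j) / beta a b * betaPDFReal (a + i) (b + j) t := by
  by_cases ht : 0 < t ∧ t < 1
  · have hab := (beta_pos ha hb).ne'
    have habij := (beta_pos (α := a + i) (β := b + j) (by positivity) (by positivity)).ne'
    have hi : t ^ (a + i - 1) = t ^ (a - 1) * t ^ i := by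
      rw [← Real.rpow_add_natCast ht.1.ne']; ring_nf
    have hj : (1 - t) ^ (b + j - 1) = (1 - t) ^ (b - 1) * (1 - t) ^ j := by
      rw [← Real.rpow_add_natCast (sub_pos.2 ht.2).ne']; ring_nf
    simp only [betaPDFReal, if_pos ht, hi, hj]
    field_simp
  · simp [betaPDFReal, ht]

theorem Gamma_add_natCast (ha : 0 < a) (n : ℕ) :
    Real.Gamma (a + n) = (ascPochhammer ℝ n).eval a * Real.Gamma a := by
  induction n with
  | zero => simp
  | succ n ih =>
    rw [Nat.cast_succ, ← add_assoc, Real.Gamma_add_one (by positivity), ih,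
      ascPochhammer_succ_eval]
    ring

theorem beta_add_natCast_div_beta (ha : 0 < a) (hb : 0 < b) (i j : ℕ) :
    beta (a + i) (b + j) / beta a b =
      (ascPochhammer ℝ i).eval a * (ascPochhammer ℝ j).eval b /
        (ascPochhammer ℝ (i + j)).eval (a + b) := by
  have hsum : a + i + (b + j) = a + b + (i + j : ℕ) := by push_cast; ring
  have hΓa := (Real.Gamma_pos_of_pos ha).ne'
  have hΓb := (Real.Gamma_pos_of_pos hb).ne'
  have hΓab := (Real.Gamma_pos_of_pos (add_pos ha hb)).ne'
  have hpoch := (ascPochhammer_pos (i + j) (a + b) (add_pos ha hb)).ne'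
  rw [beta, beta, hsum, Gamma_add_natCast ha, Gamma_add_natCast hb,
    Gamma_add_natCast (add_pos ha hb)]
  field_simp

theorem integral_pow_mul_pow_mul_betaPDFReal (ha : 0 < a) (hb : 0 < b) (i j : ℕ) :
    ∫ t, t ^ i * (1 - t) ^ j * betaPDFReal a b t =
      (ascPochhammer ℝ i).eval a * (ascPochhammer ℝ j).eval b /
        (ascPochhammer ℝ (i + j)).eval (a + b) := by
  simp_rw [pow_mul_pow_mul_betaPDFReal ha hb]
  rw [integral_const_mul, integral_betaPDFReal (by positivity) (by positivity), mul_one,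
    beta_add_natCast_div_beta ha hb]

theorem integrable_pow_mul_pow_mul_betaPDFReal (ha : 0 < a) (hb : 0 < b) (i j : ℕ) :
    Integrable fun t => t ^ i * (1 - t) ^ j * betaPDFReal a b t := by
  simp_rw [pow_mul_pow_mul_betaPDFReal ha hb]
  exact (integrable_of_integral_eq_one
    (integral_betaPDFReal (by positivity) (by positivity))).const_mul _

end BetaMoments

section ClosedConvexHull

variable {A : Type*} [Ring A] [Algebra ℝ A] [TopologicalSpace A] [ContinuousMul A] {s t u : Set A}

theorem const_mul_mem_of_mem_closedConvexHull (hconv : Convex ℝ u) (hclosed : IsClosed u) {x y : A}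
    (hxs : ∀ z ∈ s, x * z ∈ u) (hy : y ∈ closedConvexHull ℝ s) : x * y ∈ u :=
  closedConvexHull_min (t := (x * ·) ⁻¹' u) hxs (hconv.linear_preimage (LinearMap.mulLeft ℝ x))
    (hclosed.preimage (continuous_const_mul x)) hy

theorem mul_mem_of_mem_closedConvexHull (hconv : Convex ℝ u) (hclosed : IsClosed u) {x y : A}
    (hst : ∀ z ∈ s, ∀ w ∈ t, z * w ∈ u) (hx : x ∈ closedConvexHull ℝ s)
    (hy : y ∈ closedConvexHull ℝ t) : x * y ∈ u :=
  closedConvexHull_min (t := (· * y) ⁻¹' u)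
    (fun z hz => const_mul_mem_of_mem_closedConvexHull hconv hclosed (hst z hz) hy)
    (hconv.linear_preimage (LinearMap.mulRight ℝ y)) (hclosed.preimage (continuous_mul_const y)) hx

end ClosedConvexHull

/-- The power series of the kernel `(1 - y z)^(-a)`, whose coefficients are `(a)_n / n! * y ^ n`. -/
noncomputable def negPow (a : ℝ) (y : ℂ) : ℂ⟦X⟧ :=
  mk fun n => (((ascPochhammer ℝ n).eval a / n.factorial : ℝ) : ℂ) * y ^ n

/-- The closed convex hull of the kernels `(1 - y z)^(-a)` with `|y| ≤ 1`, for coefficientwise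
convergence. -/
def negPowHull (a : ℝ) : Set ℂ⟦X⟧ :=
  closedConvexHull ℝ (negPow a '' closedBall 0 1)

section NegPow

variable {a b : ℝ} {y w : ℂ}

theorem negPow_mem_negPowHull (hy : ‖y‖ ≤ 1) : negPow a y ∈ negPowHull a :=
  subset_closedConvexHull ⟨y, mem_closedBall_zero_iff.2 hy, rfl⟩

theorem convex_negPowHull : Convex ℝ (negPowHull a) :=
  convex_closedConvexHull

theorem isClosed_negPowHull : IsClosed (negPowHull a) :=
  isClosed_closedConvexHull

theorem coeff_negPow_one (n : ℕ) : coeff n (negPow 1 y) = y ^ n := by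
  simp [negPow, ascPochhammer_eval_one, n.factorial_ne_zero]

theorem constantCoeff_negPow : constantCoeff (negPow a y) = 1 := by
  simp [negPow, ← coeff_zero_eq_constantCoeff_apply]

theorem smul_coeff_negPow_lineMap (p t : ℝ) (n : ℕ) :
    p • coeff n (negPow a (t * y + (1 - t : ℝ) * w)) =
      ∑ ij ∈ antidiagonal n, (t ^ ij.1 * (1 - t) ^ ij.2 * p) •
        (((ascPochhammer ℝ n).eval a / (ij.1.factorial * ij.2.factorial) : ℝ) *
          (y ^ ij.1 * w ^ ij.2)) := by
  rw [negPow, coeff_mk, Commute.add_pow' (Commute.all _ _), mul_sum, smul_sum]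
  refine sum_congr rfl fun ij hij => ?_
  obtain rfl := mem_antidiagonal.1 hij
  have hn : ((ij.1 + ij.2).factorial : ℂ) ≠ 0 := by exact_mod_cast Nat.factorial_ne_zero _
  have hi : (ij.1.factorial : ℂ) ≠ 0 := by exact_mod_cast Nat.factorial_ne_zero _
  have hj : (ij.2.factorial : ℂ) ≠ 0 := by exact_mod_cast Nat.factorial_ne_zero _
  have hchoose : ((ij.1 + ij.2).choose ij.1 : ℂ) * (ij.1.factorial * ij.2.factorial) =
      (ij.1 + ij.2).factorial := by
    rw [Nat.choose_symm_add]
    exact_mod_cast (mul_assoc _ _ _).symm.trans (Nat.add_choose_mul_factorial_mul_factorial _ _)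
  simp only [nsmul_eq_mul, Complex.real_smul, mul_pow]
  push_cast
  rw [← hchoose]
  have hC : ((ij.1 + ij.2).choose ij.1 : ℂ) ≠ 0 := left_ne_zero_of_mul (hchoose ▸ hn)
  field_simp

theorem coeff_negPow_mul_negPow_eq_integral (ha : 0 < a) (hb : 0 < b) (n : ℕ) :
    coeff n (negPow a y * negPow b w) =
      ∫ t, betaPDFReal a b t • coeff n (negPow (a + b) (t * y + (1 - t : ℝ) * w)) := by
  simp_rw [smul_coeff_negPow_lineMap]
  rw [integral_finsetSum _ fun ij _ =>
    (integrable_pow_mul_pow_mul_betaPDFReal ha hb ij.1 ij.2).smul_const _, coeff_mul]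
  refine sum_congr rfl fun ij hij => ?_
  obtain rfl := mem_antidiagonal.1 hij
  have hpoch : (((ascPochhammer ℝ (ij.1 + ij.2)).eval (a + b) : ℝ) : ℂ) ≠ 0 := by
    exact_mod_cast (ascPochhammer_pos _ _ (add_pos ha hb)).ne'
  rw [integral_smul_const, integral_pow_mul_pow_mul_betaPDFReal ha hb]
  simp only [negPow, coeff_mk, Complex.real_smul]
  push_cast
  field_simp

/-- A Dirichlet average: `(1 - y z)^(-a) (1 - w z)^(-b)` is the mean of
`(1 - (t y + (1 - t) w) z)^(-(a + b))` over a beta distributed `t`. -/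
theorem negPow_mul_negPow_mem_negPowHull (ha : 0 < a) (hb : 0 < b) (hy : ‖y‖ ≤ 1) (hw : ‖w‖ ≤ 1) :
    negPow a y * negPow b w ∈ negPowHull (a + b) := by
  refine mem_of_coeff_eq_integral convex_negPowHull isClosed_negPowHull
    (ae_of_all _ (betaPDFReal_nonneg ha hb)) (integral_betaPDFReal ha hb)
    (ae_of_all _ fun t ht => ?_) (fun n => ?_) (coeff_negPow_mul_negPow_eq_integral ha hb)
  · have ht01 : 0 < t ∧ t < 1 := by
      by_contra h
      exact ht (if_neg h)
    refine negPow_mem_negPowHull (mem_closedBall_zero_iff.1 ?_)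
    simpa only [Complex.real_smul] using convex_closedBall (0 : ℂ) 1
      (mem_closedBall_zero_iff.2 hy) (mem_closedBall_zero_iff.2 hw) ht01.1.le (sub_pos.2 ht01.2).le
      (add_sub_cancel t 1)
  · simp_rw [smul_coeff_negPow_lineMap]
    exact integrable_finsetSum _ fun ij _ =>
      (integrable_pow_mul_pow_mul_betaPDFReal ha hb ij.1 ij.2).smul_const _

theorem mul_mem_negPowHull (ha : 0 < a) (hb : 0 < b) {φ ψ : ℂ⟦X⟧} (hφ : φ ∈ negPowHull a)
    (hψ : ψ ∈ negPowHull b) : φ * ψ ∈ negPowHull (a + b) := by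
  refine mul_mem_of_mem_closedConvexHull convex_negPowHull isClosed_negPowHull ?_ hφ hψ
  rintro _ ⟨y, hy, rfl⟩ _ ⟨w, hw, rfl⟩
  exact negPow_mul_negPow_mem_negPowHull ha hb (mem_closedBall_zero_iff.1 hy)
    (mem_closedBall_zero_iff.1 hw)

end NegPow

section LogDeriv

theorem X_mul_derivative_eq_iff {R : Type*} [CommRing R] {P φ : R⟦X⟧} :
    X * d⁄dX R φ = (P - C (constantCoeff P)) * φ ↔
      ∀ n : ℕ, (n + 1) * coeff (n + 1) φ =
        ∑ ij ∈ antidiagonal n, coeff (ij.1 + 1) P * coeff ij.2 φ := by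
  have hcoeff : ∀ n, coeff (n + 1) ((P - C (constantCoeff P)) * φ) =
      ∑ ij ∈ antidiagonal n, coeff (ij.1 + 1) P * coeff ij.2 φ := fun n => by
    simp [coeff_mul, Nat.sum_antidiagonal_succ, coeff_C]
  refine ⟨fun h n => ?_, fun h => PowerSeries.ext fun n => ?_⟩
  · rw [← hcoeff, ← h, coeff_succ_X_mul, coeff_derivative, mul_comm]
  · cases n with
    | zero => simp
    | succ n => rw [hcoeff, ← h, coeff_succ_X_mul, coeff_derivative, mul_comm]

variable {K : Type*} [Field K]

/-- The coefficients of `ofLogDeriv P`, determined recursively by its differential equation. -/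
noncomputable def ofLogDerivCoeff (P : K⟦X⟧) : ℕ → K
  | 0 => 1
  | n + 1 => (n + 1 : K)⁻¹ * ∑ i : Fin (n + 1), coeff (n - i + 1) P * ofLogDerivCoeff P i

/-- The power series `φ` with constant coefficient `1` and `z φ' / φ = P - P(0)`, that is,
`exp (∫ (P - P(0)) / z)`. -/
noncomputable def ofLogDeriv (P : K⟦X⟧) : K⟦X⟧ :=
  mk (ofLogDerivCoeff P)

variable {P Q φ : K⟦X⟧}

theorem constantCoeff_ofLogDeriv : constantCoeff (ofLogDeriv P) = 1 := by
  simp [ofLogDeriv, ofLogDerivCoeff, ← coeff_zero_eq_constantCoeff_apply]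

theorem coeff_succ_ofLogDeriv (n : ℕ) :
    coeff (n + 1) (ofLogDeriv P) =
      (n + 1 : K)⁻¹ * ∑ ij ∈ antidiagonal n, coeff (ij.1 + 1) P * coeff ij.2 (ofLogDeriv P) := by
  simp only [ofLogDeriv, coeff_mk]
  rw [ofLogDerivCoeff, Fin.sum_univ_eq_sum_range fun i => coeff (n - i + 1) P * ofLogDerivCoeff P i,
    ← Nat.sum_antidiagonal_eq_sum_range_succ fun i j => coeff (j + 1) P * ofLogDerivCoeff P i,
    ← Nat.sum_antidiagonal_swap]
  rfl

theorem continuous_ofLogDeriv [TopologicalSpace K] [IsTopologicalRing K] :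
    Continuous (ofLogDeriv : K⟦X⟧ → K⟦X⟧) := by
  have hcoeff : ∀ n, Continuous fun P : K⟦X⟧ => coeff n (ofLogDeriv P) := by
    intro n
    induction n using Nat.strong_induction_on with
    | _ n ih =>
      cases n with
      | zero => simpa [constantCoeff_ofLogDeriv] using continuous_const
      | succ n =>
        simp_rw [coeff_succ_ofLogDeriv]
        refine continuous_const.mul (continuous_finsetSum _ fun ij hij => ?_)
        exact (WithPiTopology.continuous_coeff K _).mul
          (ih _ (Nat.lt_succ_of_le (HasAntidiagonal.antidiagonal.snd_le hij)))
  exact continuous_iff_continuousAt.2 fun P =>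
    (WithPiTopology.tendsto_iff_coeff_tendsto _ _ _ _).2 fun n => (hcoeff n).continuousAt

variable [CharZero K]

theorem X_mul_derivative_ofLogDeriv :
    X * d⁄dX K (ofLogDeriv P) = (P - C (constantCoeff P)) * ofLogDeriv P :=
  X_mul_derivative_eq_iff.2 fun n => by
    rw [coeff_succ_ofLogDeriv, mul_inv_cancel_left₀ (Nat.cast_add_one_ne_zero n)]

theorem eq_ofLogDeriv (h0 : constantCoeff φ = 1)
    (hφ : X * d⁄dX K φ = (P - C (constantCoeff P)) * φ) : φ = ofLogDeriv P := by
  refine PowerSeries.ext fun n => ?_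
  induction n using Nat.strong_induction_on with
  | _ n ih =>
    cases n with
    | zero => simp [h0, constantCoeff_ofLogDeriv]
    | succ n =>
      rw [coeff_succ_ofLogDeriv, eq_inv_mul_iff_mul_eq₀ (Nat.cast_add_one_ne_zero n),
        X_mul_derivative_eq_iff.1 hφ]
      exact sum_congr rfl fun ij hij => by
        rw [ih _ (Nat.lt_succ_of_le (HasAntidiagonal.antidiagonal.snd_le hij))]

theorem ofLogDeriv_add : ofLogDeriv (P + Q) = ofLogDeriv P * ofLogDeriv Q := by
  refine (eq_ofLogDeriv (by simp [constantCoeff_ofLogDeriv]) ?_).symm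
  have hP := X_mul_derivative_ofLogDeriv (P := P)
  have hQ := X_mul_derivative_ofLogDeriv (P := Q)
  rw [Derivation.leibniz, smul_eq_mul, smul_eq_mul, map_add, map_add]
  linear_combination ofLogDeriv Q * hP + ofLogDeriv P * hQ

end LogDeriv

section NegPowHullOne

theorem mul_sum_ascPochhammer_div_factorial (a : ℝ) (n : ℕ) :
    a * ∑ k ∈ range (n + 1), (ascPochhammer ℝ k).eval a / k.factorial =
      (ascPochhammer ℝ (n + 1)).eval a / n.factorial := by
  induction n with
  | zero => simp
  | succ n ih =>
    have hn : (n.factorial : ℝ) ≠ 0 := by exact_mod_cast n.factorial_ne_zero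
    rw [sum_range_succ, mul_add, ih, ascPochhammer_succ_eval (n + 1), Nat.factorial_succ]
    push_cast
    field_simp
    ring

theorem X_mul_derivative_negPow (a : ℝ) (y : ℂ) :
    X * d⁄dX ℂ (negPow a y) =
      (a • negPow 1 y - C (constantCoeff (a • negPow 1 y))) * negPow a y := by
  refine X_mul_derivative_eq_iff.2 fun n => ?_
  have hterm : ∀ k ∈ range (n + 1),
      coeff (n - k + 1) (a • negPow 1 y) * coeff k (negPow a y) =
        ((a * ((ascPochhammer ℝ k).eval a / k.factorial) : ℝ) : ℂ) * y ^ (n + 1) := by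
    intro k hk
    have hpow : y ^ (n + 1) = y ^ (n - k + 1) * y ^ k := by
      rw [← pow_add]; congr 1; grind
    rw [coeff_smul, coeff_negPow_one, hpow, negPow, coeff_mk, Complex.real_smul]
    push_cast
    ring
  have hn : (n.factorial : ℂ) ≠ 0 := by exact_mod_cast n.factorial_ne_zero
  have hn1 : (n + 1 : ℂ) ≠ 0 := Nat.cast_add_one_ne_zero n
  rw [← Nat.sum_antidiagonal_swap]
  simp only [Prod.fst_swap, Prod.snd_swap]
  rw [Nat.sum_antidiagonal_eq_sum_range_succ fun i j =>
    coeff (j + 1) (a • negPow 1 y) * coeff i (negPow a y), sum_congr rfl hterm, ← sum_mul,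
    ← Complex.ofReal_sum, ← mul_sum, mul_sum_ascPochhammer_div_factorial, negPow, coeff_mk,
    Nat.factorial_succ]
  push_cast
  field_simp

theorem negPow_eq_ofLogDeriv (a : ℝ) (y : ℂ) : negPow a y = ofLogDeriv (a • negPow 1 y) :=
  eq_ofLogDeriv constantCoeff_negPow (X_mul_derivative_negPow a y)

theorem ofLogDeriv_smul_mem_negPowHull {U : ℂ⟦X⟧} (hU : U ∈ negPowHull 1) {a : ℝ} (ha : 0 < a) :
    ofLogDeriv (a • U) ∈ negPowHull a := by
  suffices h : negPowHull 1 ⊆ {U | ∀ a : ℝ, 0 < a → ofLogDeriv (a • U) ∈ negPowHull a} from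
    h hU a ha
  refine closedConvexHull_min ?_ (convex_iff_forall_pos.2 ?_) ?_
  · rintro _ ⟨y, hy, rfl⟩ a -
    exact negPow_eq_ofLogDeriv a y ▸ negPow_mem_negPowHull (mem_closedBall_zero_iff.1 hy)
  · intro U hU V hV p q hp hq hpq a ha
    rw [smul_add, smul_smul, smul_smul, ofLogDeriv_add]
    have := mul_mem_negPowHull (mul_pos ha hp) (mul_pos ha hq) (hU _ (mul_pos ha hp))
      (hV _ (mul_pos ha hq))
    rwa [← mul_add, hpq, mul_one] at this
  · simp only [Set.ofPred_forall]
    exact isClosed_iInter fun a => isClosed_iInter fun _ =>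
      isClosed_negPowHull.preimage (continuous_ofLogDeriv.comp (continuous_const_smul a))

end NegPowHullOne

/-- The Taylor series of `F` at `0`, as a formal power series. -/
noncomputable def taylorSeries (F : ℂ → ℂ) : ℂ⟦X⟧ :=
  mk (taylorCoeff F)

section TaylorSeries

variable {F G : ℂ → ℂ}

theorem coeff_taylorSeries (n : ℕ) : coeff n (taylorSeries F) = taylorCoeff F n :=
  coeff_mk _ _

theorem constantCoeff_taylorSeries : constantCoeff (taylorSeries F) = F 0 := by
  simp [taylorSeries, taylorCoeff, ← coeff_zero_eq_constantCoeff_apply]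

theorem taylorSeries_congr (h : F =ᶠ[𝓝 0] G) : taylorSeries F = taylorSeries G := by
  ext n
  simp only [coeff_taylorSeries, taylorCoeff, h.iteratedDeriv_eq n]

theorem taylorSeries_mul (hF : AnalyticAt ℂ F 0) (hG : AnalyticAt ℂ G 0) :
    taylorSeries (F * G) = taylorSeries F * taylorSeries G := by
  ext n
  simp only [coeff_mul, coeff_taylorSeries, taylorCoeff]
  rw [iteratedDeriv_mul hF.contDiffAt hG.contDiffAt, sum_div,
    Nat.sum_antidiagonal_eq_sum_range_succ fun i j =>
      iteratedDeriv i F 0 / i.factorial * (iteratedDeriv j G 0 / j.factorial)]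
  refine sum_congr rfl fun i hi => ?_
  rw [Nat.cast_choose ℂ (mem_range_succ_iff.1 hi)]
  have hn : (n.factorial : ℂ) ≠ 0 := by exact_mod_cast n.factorial_ne_zero
  field_simp

theorem taylorSeries_deriv : taylorSeries (deriv F) = d⁄dX ℂ (taylorSeries F) := by
  ext n
  rw [coeff_derivative, coeff_taylorSeries, coeff_taylorSeries, taylorCoeff, taylorCoeff,
    ← iteratedDeriv_succ', Nat.factorial_succ]
  have hn : (n + 1 : ℂ) ≠ 0 := Nat.cast_add_one_ne_zero n
  push_cast
  field_simp

theorem taylorSeries_const (c : ℂ) : taylorSeries (fun _ => c) = C c := by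
  ext n
  rw [coeff_taylorSeries, taylorCoeff, coeff_C, iteratedDeriv_const]
  split_ifs with hn <;> simp [hn]

theorem taylorSeries_id : taylorSeries id = X := by
  ext n
  rw [coeff_taylorSeries, taylorCoeff, coeff_X]
  match n with
  | 0 => simp
  | 1 => simp
  | n + 2 => simp [iteratedDeriv_succ', iteratedDeriv_const, deriv_id']

end TaylorSeries

section Herglotz

theorem mem_of_coeff_eq_circleAverage {A : Type*} [NormedRing A] [NormedAlgebra ℝ A]
    [CompleteSpace A] {S : Set A⟦X⟧} (hconv : Convex ℝ S) (hclosed : IsClosed S) {c : ℂ} {R : ℝ}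
    {w : ℂ → ℝ} {F : ℂ → A⟦X⟧} {φ : A⟦X⟧} (hw : ∀ z ∈ sphere c |R|, 0 ≤ w z)
    (hw1 : Real.circleAverage w c R = 1) (hF : ∀ z ∈ sphere c |R|, F z ∈ S)
    (hint : ∀ n, CircleIntegrable (fun z => w z • coeff n (F z)) c R)
    (hφ : ∀ n, coeff n φ = Real.circleAverage (fun z => w z • coeff n (F z)) c R) : φ ∈ S := by
  have hmem (t : ℝ) : circleMap c R t ∈ sphere c |R| := circleMap_mem_sphere' c R t
  have hpi : 0 ≤ (2 * Real.pi)⁻¹ := by positivity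
  refine mem_of_coeff_eq_integral (μ := volume.restrict (Set.Ioc 0 (2 * Real.pi)))
    (w := fun t => (2 * Real.pi)⁻¹ * w (circleMap c R t)) (F := fun t => F (circleMap c R t))
    hconv hclosed (ae_of_all _ fun t => mul_nonneg hpi (hw _ (hmem t))) ?_
    (ae_of_all _ fun t _ => hF _ (hmem t)) (fun n => ?_) (fun n => ?_)
  · rw [← hw1, Real.circleAverage_def, intervalIntegral.integral_of_le Real.two_pi_pos.le,
      integral_const_mul, smul_eq_mul]
  · simp_rw [mul_smul]
    exact ((intervalIntegrable_iff_integrableOn_Ioc_of_le Real.two_pi_pos.le).1 (hint n)).smul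
      (2 * Real.pi)⁻¹
  · simp_rw [hφ, mul_smul, Real.circleAverage_def,
      intervalIntegral.integral_of_le Real.two_pi_pos.le, integral_smul]

variable {h : ℂ → ℂ} {r : ℝ}

theorem circleAverage_conj_pow_mul (hh : DiffContOnCl ℂ h (ball 0 r)) (hr : 0 < r) (n : ℕ) :
    Real.circleAverage (fun z => conj z ^ n * h z) 0 r = r ^ (2 * n) * taylorCoeff h n := by
  have hcongr : ∮ z in C(0, r), (z - 0)⁻¹ • (conj z ^ n * h z) =
      ∮ z in C(0, r), (r : ℂ) ^ (2 * n) • (1 / (z - 0) ^ (n + 1)) • h z := by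
    refine circleIntegral.integral_congr hr.le fun z hz => ?_
    have hz0 : z ≠ 0 := ne_of_mem_sphere hz hr.ne'
    have hconj : conj z * z = (r : ℂ) ^ 2 := by
      rw [Complex.conj_mul', mem_sphere_zero_iff_norm.1 hz]
    simp only [sub_zero, smul_eq_mul, pow_mul, ← hconj, mul_pow]
    field_simp
    ring
  rw [Real.circleAverage_eq_circleIntegral hr.ne', hcongr, circleIntegral.integral_smul,
    hh.circleIntegral_one_div_sub_center_pow_smul hr, taylorCoeff]
  simp only [smul_eq_mul]
  field_simp

theorem circleAverage_two_mul_re_smul_conj_pow (hh : DiffContOnCl ℂ h (ball 0 r)) (hr : 0 < r)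
    (n : ℕ) :
    Real.circleAverage (fun z => (2 * (h z).re) • conj z ^ n) 0 r =
      r ^ (2 * n) * taylorCoeff h n + conj (0 ^ n * h 0) := by
  have hcont : ContinuousOn h (sphere 0 r) := hh.continuousOn_ball.mono sphere_subset_closedBall
  have hint : CircleIntegrable (fun z => z ^ n * h z) 0 r :=
    ContinuousOn.circleIntegrable hr.le ((continuousOn_id.pow n).mul hcont)
  have hint_conj : CircleIntegrable (fun z => conj z ^ n * h z) 0 r :=
    ContinuousOn.circleIntegrable hr.le
      ((Complex.continuous_conj.pow n).continuousOn.mul hcont)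
  have hint' : CircleIntegrable (fun z => conj (z ^ n * h z)) 0 r :=
    ContinuousOn.circleIntegrable hr.le
      (Complex.continuous_conj.comp_continuousOn ((continuousOn_id.pow n).mul hcont))
  have hmean : Real.circleAverage (fun z => z ^ n * h z) 0 r = 0 ^ n * h 0 := by
    have hpow : DiffContOnCl ℂ (fun z : ℂ => z ^ n) (ball 0 r) :=
      (differentiable_id.pow n).diffContOnCl
    exact DiffContOnCl.circleAverage (by simpa only [abs_of_pos hr, smul_eq_mul] using hpow.smul hh)
  have hsplit : (fun z => (2 * (h z).re) • conj z ^ n) =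
      fun z => conj z ^ n * h z + conj (z ^ n * h z) := by
    ext z
    rw [Complex.real_smul, Complex.ofReal_mul, Complex.re_eq_add_conj, map_mul, map_pow]
    push_cast
    ring
  rw [hsplit, Real.circleAverage_fun_add hint_conj hint', circleAverage_conj_pow_mul hh hr, ← hmean]
  exact congrArg _ ((Complex.conjCLE : ℂ →L[ℝ] ℂ).circleAverage_comp_comm hint)

theorem circleAverage_re (hh : DiffContOnCl ℂ h (ball 0 r)) (hr : 0 < r) :
    Real.circleAverage (fun z => (h z).re) 0 r = (h 0).re := by
  have hint : CircleIntegrable h 0 r :=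
    (hh.continuousOn_ball.mono sphere_subset_closedBall).circleIntegrable hr.le
  rw [← DiffContOnCl.circleAverage (f := h) (R := r) (by rwa [abs_of_pos hr])]
  exact Complex.reCLM.circleAverage_comp_comm hint

theorem re_apply_zero_pos (hh : DifferentiableOn ℂ h (ball 0 1))
    (hpos : ∀ z ∈ ball (0 : ℂ) 1 \ {0}, 0 < (h z).re) : 0 < (h 0).re := by
  have hhalf : ∀ t, circleMap 0 (1 / 2) t ∈ sphere (0 : ℂ) (1 / 2) :=
    circleMap_mem_sphere 0 (by norm_num)
  have hint : CircleIntegrable (fun z => (h z).re) 0 (1 / 2) :=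
    ContinuousOn.circleIntegrable (by norm_num) (Complex.continuous_re.comp_continuousOn
      (hh.continuousOn.mono (sphere_subset_ball (by norm_num))))
  rw [← circleAverage_re (hh.diffContOnCl_ball (closedBall_subset_ball one_half_lt_one))
    one_half_pos, Real.circleAverage_def]
  refine smul_pos (inv_pos.2 Real.two_pi_pos)
    (intervalIntegral.intervalIntegral_pos_of_pos_on hint (fun t _ => hpos _ ⟨?_, ?_⟩)
      Real.two_pi_pos)
  · exact sphere_subset_ball (by norm_num) (hhalf t)
  · exact ne_of_mem_sphere (hhalf t) (by norm_num)

theorem rescale_taylorSeries_add_conj_mem_negPowHull (hh : DifferentiableOn ℂ h (ball 0 1))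
    (hpos : ∀ z ∈ ball (0 : ℂ) 1 \ {0}, 0 < (h z).re) (hr0 : 0 < r) (hr1 : r < 1) :
    (2 * (h 0).re)⁻¹ • (rescale ((r : ℂ) ^ 2) (taylorSeries h) + C (conj (h 0))) ∈
      negPowHull 1 := by
  have hκ := re_apply_zero_pos hh hpos
  have hcl := hh.diffContOnCl_ball (closedBall_subset_ball hr1)
  have hsub : sphere (0 : ℂ) |r| ⊆ ball 0 1 := by
    rw [abs_of_pos hr0]
    exact sphere_subset_ball hr1
  have hre : ContinuousOn (fun z => (h z).re) (sphere 0 |r|) :=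
    Complex.continuous_re.comp_continuousOn (hh.continuousOn.mono hsub)
  refine mem_of_coeff_eq_circleAverage convex_negPowHull isClosed_negPowHull
    (w := fun z => (2 * (h 0).re)⁻¹ * (2 * (h z).re)) (F := fun z => negPow 1 (conj z)) (c := 0)
    (R := r) (fun z hz => ?_) ?_ (fun z hz => ?_) (fun n => ?_) (fun n => ?_)
  · have := hpos z ⟨hsub hz, ne_of_mem_sphere hz (abs_pos.2 hr0.ne').ne'⟩
    positivity
  · simp_rw [← smul_eq_mul, Real.circleAverage_fun_smul, circleAverage_re hcl hr0, smul_eq_mul]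
    field_simp
  · refine negPow_mem_negPowHull ?_
    rw [RCLike.norm_conj]
    exact (mem_ball_zero_iff.1 (hsub hz)).le
  · simp_rw [coeff_negPow_one]
    exact (((continuousOn_const.mul (continuousOn_const.mul hre))).smul
      (Complex.continuous_conj.pow n).continuousOn).circleIntegrable'
  · simp_rw [coeff_negPow_one, mul_smul (2 * (h 0).re)⁻¹, Real.circleAverage_fun_smul]
    rw [circleAverage_two_mul_re_smul_conj_pow hcl hr0, coeff_smul, map_add, coeff_rescale,
      coeff_taylorSeries, pow_mul, coeff_C]
    split_ifs with hn <;> simp [hn]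

/-- Herglotz: the numbers `Re h(r e^{it})` are weights of a mean of the kernels
`1 / (1 - r e^{-it} z)`, and `r → 1`. -/
theorem taylorSeries_add_conj_mem_negPowHull (hh : DifferentiableOn ℂ h (ball 0 1))
    (hpos : ∀ z ∈ ball (0 : ℂ) 1 \ {0}, 0 < (h z).re) :
    (2 * (h 0).re)⁻¹ • (taylorSeries h + C (conj (h 0))) ∈ negPowHull 1 := by
  let Φ (r : ℝ) : ℂ⟦X⟧ :=
    (2 * (h 0).re)⁻¹ • (rescale ((r : ℂ) ^ 2) (taylorSeries h) + C (conj (h 0)))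
  have hΦ : Tendsto Φ (𝓝[<] 1) (𝓝 (Φ 1)) := by
    refine Tendsto.mono_left ?_ nhdsWithin_le_nhds
    refine (WithPiTopology.tendsto_iff_coeff_tendsto _ _ _ _).2 fun n => ?_
    simp only [Φ, coeff_smul, map_add, coeff_rescale]
    exact Continuous.tendsto (by fun_prop) 1
  have hmem : Φ 1 ∈ negPowHull 1 := by
    refine isClosed_negPowHull.mem_of_tendsto hΦ ?_
    filter_upwards [Ioo_mem_nhdsLT one_pos] with r hr
    exact rescale_taylorSeries_add_conj_mem_negPowHull hh hpos hr.1 hr.2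
  simpa [Φ] using hmem

end Herglotz

section GeometricFunctions

variable {p f g : ℂ → ℂ} {e : ℂ}

theorem analyticAt_zero_of_differentiableOn_ball (hp : DifferentiableOn ℂ p (ball 0 1)) :
    AnalyticAt ℂ p 0 :=
  hp.analyticAt (ball_mem_nhds 0 one_pos)

theorem real_smul_eq_C_mul (r : ℝ) (φ : ℂ⟦X⟧) : r • φ = C (r : ℂ) * φ := by
  ext n
  simp

theorem exists_taylorSeries_eq_of_re_mul_pos (hp : DifferentiableOn ℂ p (ball 0 1))
    (hp0 : p 0 = 1) (he : ‖e‖ = 1) (hpos : ∀ z ∈ ball (0 : ℂ) 1 \ {0}, 0 < (e * p z).re) :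
    ∃ U ∈ negPowHull 1, taylorSeries p = C (1 + conj e ^ 2) * U - C (conj e ^ 2) := by
  have hh : DifferentiableOn ℂ ((fun _ => e) * p) (ball 0 1) := (differentiableOn_const e).mul hp
  have hκ := re_apply_zero_pos hh hpos
  have hU := taylorSeries_add_conj_mem_negPowHull hh hpos
  refine ⟨_, hU, ?_⟩
  rw [taylorSeries_mul analyticAt_const (analyticAt_zero_of_differentiableOn_ball hp),
    taylorSeries_const]
  simp only [Pi.mul_apply, hp0, mul_one] at hκ ⊢
  have hconj : conj e * e = 1 := by rw [Complex.conj_mul', he]; norm_num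
  have hscale : (1 + conj e ^ 2) * ((2 * e.re)⁻¹ : ℝ) = conj e := by
    have hre0 : (2 * e.re : ℂ) ≠ 0 := by exact_mod_cast (mul_pos two_pos hκ).ne'
    have hre : (2 * e.re : ℂ) = e + conj e := by rw [Complex.add_conj]; push_cast; rfl
    push_cast
    rw [← div_eq_mul_inv, div_eq_iff hre0]
    linear_combination -conj e * hre - hconj
  rw [real_smul_eq_C_mul, ← mul_assoc, ← map_mul, hscale, mul_add, ← mul_assoc,
    ← map_mul, hconj, ← map_mul, map_one, one_mul, pow_two, add_sub_cancel_right]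

namespace IsStarlikeFn

variable (hg : IsStarlikeFn g)
include hg

theorem eq_mul_dslope (z : ℂ) : g z = z * dslope g 0 z := by
  simpa [hg.2.1] using (sub_smul_dslope g 0 z).symm

theorem dslope_zero : dslope g 0 0 = 1 := by
  rw [dslope_same, hg.2.2.1]

theorem differentiableOn_dslope : DifferentiableOn ℂ (dslope g 0) (ball 0 1) :=
  (Complex.differentiableOn_dslope (ball_mem_nhds 0 one_pos)).2 hg.1

theorem dslope_ne_zero {z : ℂ} (hz : z ∈ ball (0 : ℂ) 1) : dslope g 0 z ≠ 0 := by
  rcases eq_or_ne z 0 with rfl | hz0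
  · rw [hg.dslope_zero]
    exact one_ne_zero
  · intro h
    have hpos := hg.2.2.2 z ⟨hz, hz0⟩
    rw [hg.eq_mul_dslope, h] at hpos
    simp at hpos

theorem mul_div_eq_div_dslope {z : ℂ} (hz : z ≠ 0) (a : ℂ) : z * a / g z = a / dslope g 0 z := by
  rw [hg.eq_mul_dslope, mul_div_mul_left _ _ hz]

theorem taylorSeries_eq_X_mul : taylorSeries g = X * taylorSeries (dslope g 0) := by
  rw [← taylorSeries_id, ← taylorSeries_mul analyticAt_id
    (analyticAt_zero_of_differentiableOn_ball hg.differentiableOn_dslope)]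
  exact congrArg _ (funext hg.eq_mul_dslope)

theorem differentiableOn_div_dslope (hp : DifferentiableOn ℂ p (ball 0 1)) :
    DifferentiableOn ℂ (p / dslope g 0) (ball 0 1) :=
  hp.div hg.differentiableOn_dslope fun _ hz => hg.dslope_ne_zero hz

theorem taylorSeries_div_dslope_mul (hp : DifferentiableOn ℂ p (ball 0 1)) :
    taylorSeries (p / dslope g 0) * taylorSeries (dslope g 0) = taylorSeries p := by
  rw [← taylorSeries_mul
    (analyticAt_zero_of_differentiableOn_ball (hg.differentiableOn_div_dslope hp))
    (analyticAt_zero_of_differentiableOn_ball hg.differentiableOn_dslope)]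
  refine taylorSeries_congr ?_
  filter_upwards [ball_mem_nhds (0 : ℂ) one_pos] with z hz
  exact div_mul_cancel₀ _ (hg.dslope_ne_zero hz)

theorem taylorSeries_dslope_mem_negPowHull : taylorSeries (dslope g 0) ∈ negPowHull 2 := by
  set q : ℂ → ℂ := deriv g / dslope g 0 with hq
  have hg' : DifferentiableOn ℂ (deriv g) (ball 0 1) := hg.1.deriv isOpen_ball
  have hq0 : q 0 = 1 := by rw [hq, Pi.div_apply, hg.dslope_zero, hg.2.2.1, div_one]
  have hqpos : ∀ z ∈ ball (0 : ℂ) 1 \ {0}, 0 < (1 * q z).re := fun z hz => by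
    rw [one_mul, hq, Pi.div_apply, ← hg.mul_div_eq_div_dslope hz.2]
    exact hg.2.2.2 z hz
  obtain ⟨U, hU, hUq⟩ := exists_taylorSeries_eq_of_re_mul_pos
    (hg.differentiableOn_div_dslope hg') hq0 norm_one hqpos
  have h2U : (2 : ℝ) • U = taylorSeries q + 1 := by
    simp [hq, hUq, real_smul_eq_C_mul, one_add_one_eq_two]
  have hode : X * d⁄dX ℂ (taylorSeries (dslope g 0)) =
      ((2 : ℝ) • U - C (constantCoeff ((2 : ℝ) • U))) * taylorSeries (dslope g 0) := by
    have hderiv := hg.taylorSeries_div_dslope_mul hg'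
    rw [taylorSeries_deriv, hg.taylorSeries_eq_X_mul, Derivation.leibniz, derivative_X,
      smul_eq_mul, smul_eq_mul, mul_one] at hderiv
    rw [h2U, map_add, map_one, constantCoeff_taylorSeries, hq0, map_add, map_one]
    linear_combination -hderiv
  rw [eq_ofLogDeriv (constantCoeff_taylorSeries.trans hg.dslope_zero) hode]
  exact ofLogDeriv_smul_mem_negPowHull hU two_pos

end IsStarlikeFn

/-- The derivative of the extreme close-to-convex functions, `(1 - v z) / (1 - w z)^3`. -/
noncomputable def closeToConvexKernel (v w : ℂ) : ℂ⟦X⟧ :=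
  (1 - C v * X) * negPow 3 w

/-- The closed convex hull of the kernels `(1 - v z) / (1 - w z)^3` with `|v| ≤ 1` and `|w| ≤ 1`,
which contains the derivatives of the close-to-convex functions. -/
def closeToConvexHull : Set ℂ⟦X⟧ :=
  closedConvexHull ℝ (Set.image2 closeToConvexKernel (closedBall 0 1) (closedBall 0 1))

theorem one_sub_C_mul_X_mul_negPow_one (u : ℂ) : (1 - C u * X) * negPow 1 u = 1 := by
  ext n
  cases n with
  | zero => simp [constantCoeff_negPow]
  | succ n =>
    simp only [sub_mul, one_mul, mul_assoc, map_sub, coeff_C_mul, coeff_succ_X_mul,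
      coeff_negPow_one, coeff_one, n.add_one_ne_zero, if_false]
    ring

theorem C_mul_X_mul_mem_closeToConvexHull {v : ℂ} (hv : ‖v‖ ≤ 1) {φ : ℂ⟦X⟧}
    (hφ : φ ∈ negPowHull 3) : (1 - C v * X) * φ ∈ closeToConvexHull := by
  refine const_mul_mem_of_mem_closedConvexHull convex_closedConvexHull isClosed_closedConvexHull
    ?_ hφ
  rintro _ ⟨w, hw, rfl⟩
  exact subset_closedConvexHull ⟨v, mem_closedBall_zero_iff.2 hv, w, hw, rfl⟩

/-- If `U` is the kernel `1 / (1 - u z)`, then `(1 - ξ) U + ξ = (1 - ξ u z) U`. -/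
theorem mul_mem_closeToConvexHull {ξ : ℂ} (hξ : ‖ξ‖ ≤ 1) {U φ : ℂ⟦X⟧} (hU : U ∈ negPowHull 1)
    (hφ : φ ∈ negPowHull 2) : (C (1 - ξ) * U + C ξ) * φ ∈ closeToConvexHull := by
  have hmem : φ * C (1 - ξ) * U ∈ (fun ψ => ψ + φ * C ξ) ⁻¹' closeToConvexHull := by
    refine const_mul_mem_of_mem_closedConvexHull
      (convex_closedConvexHull.translate_preimage_left _)
      (isClosed_closedConvexHull.preimage (continuous_add_const _)) ?_ hU
    rintro _ ⟨u, hu, rfl⟩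
    have hξu : ‖ξ * u‖ ≤ 1 :=
      norm_mul ξ u ▸ mul_le_one₀ hξ (norm_nonneg u) (mem_closedBall_zero_iff.1 hu)
    have h3 : negPow 1 u * φ ∈ negPowHull 3 := by
      convert mul_mem_negPowHull one_pos two_pos
        (negPow_mem_negPowHull (mem_closedBall_zero_iff.1 hu)) hφ using 2
      norm_num
    have hkernel : (1 - C (ξ * u) * X) * (negPow 1 u * φ) =
        φ * C (1 - ξ) * negPow 1 u + φ * C ξ := by
      rw [map_mul, map_sub, map_one]
      linear_combination C ξ * φ * one_sub_C_mul_X_mul_negPow_one u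
    rw [Set.mem_preimage, ← hkernel]
    exact C_mul_X_mul_mem_closeToConvexHull hξu h3
  have hsplit : (C (1 - ξ) * U + C ξ) * φ = φ * C (1 - ξ) * U + φ * C ξ := by ring
  exact hsplit ▸ hmem

theorem IsCloseToConvex.taylorSeries_deriv_mem_closeToConvexHull (hf : IsCloseToConvex f) :
    taylorSeries (deriv f) ∈ closeToConvexHull := by
  obtain ⟨hfd, -, hf1, θ, g, hg, hpos⟩ := hf
  set p : ℂ → ℂ := deriv f / dslope g 0 with hp
  have hf' : DifferentiableOn ℂ (deriv f) (ball 0 1) := hfd.deriv isOpen_ball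
  have hp0 : p 0 = 1 := by rw [hp, Pi.div_apply, hg.dslope_zero, hf1, div_one]
  have hppos : ∀ z ∈ ball (0 : ℂ) 1 \ {0}, 0 < (exp (θ * I) * p z).re := fun z hz => by
    rw [hp, Pi.div_apply, ← hg.mul_div_eq_div_dslope hz.2, ← mul_div_assoc, ← mul_assoc]
    exact hpos z hz
  have he : ‖exp (θ * I)‖ = 1 := norm_exp_ofReal_mul_I θ
  obtain ⟨U, hU, hUp⟩ := exists_taylorSeries_eq_of_re_mul_pos
    (hg.differentiableOn_div_dslope hf') hp0 he hppos
  have hξ : ‖-conj (exp (θ * I)) ^ 2‖ ≤ 1 := by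
    rw [norm_neg, norm_pow, RCLike.norm_conj, he, one_pow]
  have hmem := mul_mem_closeToConvexHull hξ hU hg.taylorSeries_dslope_mem_negPowHull
  rwa [sub_neg_eq_add, map_neg, ← sub_eq_add_neg, ← hUp, hg.taylorSeries_div_dslope_mul hf'] at hmem

end GeometricFunctions

section CoefficientRegion

variable {lam : ℝ} {η v w : ℂ}

theorem coeff_two_closeToConvexKernel :
    coeff 2 (closeToConvexKernel v w) = 3 * (2 * w ^ 2 - v * w) := by
  simp only [closeToConvexKernel, negPow, ofReal_div, ofReal_natCast, sub_mul, one_mul, mul_assoc,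
    map_sub, coeff_mk, ascPochhammer_succ_eval, ascPochhammer_one, Polynomial.eval_X, Nat.cast_one,
    Nat.cast_ofNat, ofReal_mul, ofReal_ofNat, ofReal_add, ofReal_one, Nat.factorial,
    Nat.succ_eq_add_one, Nat.reduceAdd, zero_add, mul_one, coeff_C_mul,
    coeff_succ_X_mul, div_one, pow_one]
  ring

theorem coeff_four_closeToConvexKernel :
    coeff 4 (closeToConvexKernel v w) = 5 * (3 * w ^ 4 - 2 * v * w ^ 3) := by
  simp only [closeToConvexKernel, negPow, ofReal_div, ofReal_natCast, sub_mul, one_mul, mul_assoc,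
    map_sub, coeff_mk, ascPochhammer_succ_eval, ascPochhammer_one, Polynomial.eval_X, Nat.cast_one,
    Nat.cast_ofNat, ofReal_mul, ofReal_ofNat, ofReal_add, ofReal_one, Nat.factorial,
    Nat.succ_eq_add_one, Nat.reduceAdd, zero_add, mul_one, Nat.reduceMul, coeff_C_mul,
    coeff_succ_X_mul]
  ring

theorem sq_re_add_sq_im_le_one {z : ℂ} (hz : ‖z‖ ≤ 1) : z.re ^ 2 + z.im ^ 2 ≤ 1 := by
  rw [pow_two, pow_two, ← normSq_apply, normSq_eq_norm_sq]
  exact pow_le_one₀ (norm_nonneg z) hz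

theorem re_add_mul_sq_im_le_five_of_norm_le_one (hlam : lam ≤ 6 / 7) {s t : ℂ} (hs : ‖s‖ ≤ 1)
    (ht : ‖t‖ ≤ 1) : (3 * s ^ 2 - 2 * s * t).re + lam * (2 * s - t).im ^ 2 ≤ 5 := by
  have hs' := sq_re_add_sq_im_le_one hs
  have ht' := sq_re_add_sq_im_le_one ht
  calc (3 * s ^ 2 - 2 * s * t).re + lam * (2 * s - t).im ^ 2
      ≤ (3 * s ^ 2 - 2 * s * t).re + 6 / 7 * (2 * s - t).im ^ 2 := by gcongr
    _ = 4 * (s.re ^ 2 + s.im ^ 2) + (t.re ^ 2 + t.im ^ 2) -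
        ((s.re + t.re) ^ 2 + (5 * s.im + t.im) ^ 2 / 7) := by
        simp only [pow_two, sub_re, mul_re, re_ofNat, im_ofNat, mul_im, zero_mul, sub_zero,
          add_zero, sub_im]
        ring
    _ ≤ 4 * (s.re ^ 2 + s.im ^ 2) + (t.re ^ 2 + t.im ^ 2) := sub_le_self _ (by positivity)
    _ ≤ 5 := by linarith

theorem le_of_mem_closedConvexHull {E : Type*} [AddCommGroup E] [Module ℝ E] [TopologicalSpace E]
    {s : Set E} {Φ : E → ℝ} (hconv : ConvexOn ℝ Set.univ Φ) (hcont : Continuous Φ) {M : ℝ}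
    (hM : ∀ x ∈ s, Φ x ≤ M) {x : E} (hx : x ∈ closedConvexHull ℝ s) : Φ x ≤ M :=
  closedConvexHull_min (t := {y | Φ y ≤ M}) hM (by simpa using hconv.convex_le M)
    (isClosed_le hcont continuous_const) hx

theorem convexOn_re_coeff_add_mul_sq_im_coeff (hlam : 0 ≤ lam) (α β : ℂ) (m n : ℕ) :
    ConvexOn ℝ Set.univ fun φ : ℂ⟦X⟧ =>
      (α * coeff m φ).re + lam * (β * coeff n φ).im ^ 2 := by
  let reCoeff : ℂ⟦X⟧ →ₗ[ℝ] ℝ := Complex.reLm ∘ₗ (α • coeff m).restrictScalars ℝ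
  let imCoeff : ℂ⟦X⟧ →ₗ[ℝ] ℝ := Complex.imLm ∘ₗ (β • coeff n).restrictScalars ℝ
  exact (reCoeff.convexOn convex_univ).add
    (((even_two.convexOn_pow (𝕜 := ℝ)).comp_linearMap imCoeff).smul hlam)

theorem re_add_mul_sq_im_le_five_of_mem_closeToConvexHull (hlam0 : 0 ≤ lam) (hlam : lam ≤ 6 / 7)
    (hη : ‖η‖ = 1) {φ : ℂ⟦X⟧} (hφ : φ ∈ closeToConvexHull) :
    (η ^ 2 / 5 * coeff 4 φ).re + lam * (η / 3 * coeff 2 φ).im ^ 2 ≤ 5 := by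
  refine le_of_mem_closedConvexHull
    (convexOn_re_coeff_add_mul_sq_im_coeff hlam0 (η ^ 2 / 5) (η / 3) 4 2) ?_ ?_ hφ
  · have h2 : Continuous fun φ : ℂ⟦X⟧ => coeff 2 φ := WithPiTopology.continuous_coeff ℂ 2
    have h4 : Continuous fun φ : ℂ⟦X⟧ => coeff 4 φ := WithPiTopology.continuous_coeff ℂ 4
    fun_prop
  · rintro _ ⟨v, hv, w, hw, rfl⟩
    rw [mem_closedBall_zero_iff] at hv hw
    have hs : ‖η * w ^ 2‖ ≤ 1 := by
      rw [norm_mul, norm_pow, hη, one_mul]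
      exact pow_le_one₀ (norm_nonneg w) hw
    have ht : ‖η * (v * w)‖ ≤ 1 := by
      rw [norm_mul, norm_mul, hη, one_mul]
      exact mul_le_one₀ hv (norm_nonneg w) hw
    have h4 : η ^ 2 / 5 * coeff 4 (closeToConvexKernel v w) =
        3 * (η * w ^ 2) ^ 2 - 2 * (η * w ^ 2) * (η * (v * w)) := by
      rw [coeff_four_closeToConvexKernel]
      ring
    have h2 : η / 3 * coeff 2 (closeToConvexKernel v w) = 2 * (η * w ^ 2) - η * (v * w) := by
      rw [coeff_two_closeToConvexKernel]
      ring
    simpa only [h4, h2] using re_add_mul_sq_im_le_five_of_norm_le_one hlam hs ht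

theorem IsCloseToConvex.re_add_mul_sq_im_le_five {f : ℂ → ℂ} (hf : IsCloseToConvex f)
    (hlam0 : 0 ≤ lam) (hlam : lam ≤ 6 / 7) (hη : ‖η‖ = 1) :
    (η ^ 2 * taylorCoeff f 5).re + lam * (η * taylorCoeff f 3).im ^ 2 ≤ 5 := by
  have h := re_add_mul_sq_im_le_five_of_mem_closeToConvexHull hlam0 hlam hη
    hf.taylorSeries_deriv_mem_closeToConvexHull
  rw [taylorSeries_deriv, coeff_derivative, coeff_derivative, coeff_taylorSeries,
    coeff_taylorSeries] at h
  have h5 : η ^ 2 / 5 * (taylorCoeff f (4 + 1) * ((4 : ℕ) + 1)) = η ^ 2 * taylorCoeff f 5 := by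
    push_cast
    ring
  have h3 : η / 3 * (taylorCoeff f (2 + 1) * ((2 : ℕ) + 1)) = η * taylorCoeff f 3 := by
    push_cast
    ring
  rwa [h5, h3] at h

end CoefficientRegion

theorem exists_norm_eq_one_sq_mul_eq_norm (A : ℂ) : ∃ η : ℂ, ‖η‖ = 1 ∧ η ^ 2 * A = ‖A‖ := by
  obtain ⟨ζ, hζ, hζA⟩ := Complex.exists_norm_mul_eq_self A
  obtain ⟨ω, hω⟩ := IsAlgClosed.exists_pow_nat_eq (conj ζ) two_pos
  refine ⟨ω, ?_, ?_⟩
  · rw [← pow_eq_one_iff_of_nonneg (norm_nonneg ω) two_ne_zero, ← norm_pow, hω, RCLike.norm_conj,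
      hζ]
  · rw [hω]
    nth_rewrite 1 [← hζA]
    rw [← mul_assoc, Complex.conj_mul', hζ, ofReal_one, one_pow, one_mul]

theorem re_sq_eq_sq_re_sub_sq_im (z : ℂ) : (z ^ 2).re = z.re ^ 2 - z.im ^ 2 := by
  rw [pow_two, mul_re, pow_two, pow_two]

theorem generalized_zalcman_closeToConvex_n3_small_lambda
    (lam : ℝ) (hlam1 : 0 < lam) (hlam2 : lam ≤ 6 / 7)
    (f : ℂ → ℂ) (hf : IsCloseToConvex f) :
    ‖(lam : ℂ) * (taylorCoeff f 3) ^ 2 - taylorCoeff f 5‖ ≤ 5 := by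
  obtain ⟨η, hη, hηA⟩ :=
    exists_norm_eq_one_sq_mul_eq_norm (taylorCoeff f 5 - lam * taylorCoeff f 3 ^ 2)
  calc ‖(lam : ℂ) * taylorCoeff f 3 ^ 2 - taylorCoeff f 5‖
      = (η ^ 2 * (taylorCoeff f 5 - lam * taylorCoeff f 3 ^ 2)).re := by
        rw [norm_sub_rev, hηA, ofReal_re]
    _ = (η ^ 2 * taylorCoeff f 5).re + lam * (η * taylorCoeff f 3).im ^ 2 -
        lam * (η * taylorCoeff f 3).re ^ 2 := by
        rw [show η ^ 2 * (taylorCoeff f 5 - lam * taylorCoeff f 3 ^ 2) =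
          η ^ 2 * taylorCoeff f 5 - lam * (η * taylorCoeff f 3) ^ 2 by ring, sub_re, re_ofReal_mul,
          re_sq_eq_sq_re_sub_sq_im]
        ring
    _ ≤ (η ^ 2 * taylorCoeff f 5).re + lam * (η * taylorCoeff f 3).im ^ 2 :=
        sub_le_self _ (by positivity)
    _ ≤ 5 := hf.re_add_mul_sq_im_le_five hlam1.le hlam2 hη
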